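/- arXiv:1805.06854 — 6 statements merged into one kernel-verified Lean document; each statement's English description precedes it below -/
import Mathlib

section
/- Let N ≥ 2 and R a ring. If f, g : (C,d) → (C',d') are homotopic morphisms of N-complexes of R-modules, then for every 1 ≤ s ≤ N−1 and every n ∈ ℤ the induced maps {}_sH_n(f) and {}_sH_n(g) on homology are equal. -/
/-! Statement 3: homotopic morphisms of `N`-complexes induce the same map on the homology
`ₛH_l` for every `1 ≤ s ≤ N-1` and `l ∈ ℤ`; i.e. for every `s`-cycle `x` of degree `l`,
`f x - g x` is an `s`-boundary. -/

/-! An `N`-complex of `R`-modules is encoded as a module `V` with an internal `ℤ`-grading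
`gr` (via `DirectSum.IsInternal`) and an `R`-linear map `d : V → V` of degree `-1` such that
`d ^ N = 0`.  For `1 ≤ s ≤ N-1` the homology `ₛH_l` is `(ker d^s ∩ C_l) / d^{N-s}(C_{l+N-s})`. -/

section
variable {R V : Type} [Ring R] [AddCommGroup V] [Module R V]

/-- The `s`-cycles of an `N`-complex in degree `l`: `ker(d^s) ∩ C_l`. -/
def cyc (d : V →ₗ[R] V) (gr : ℤ → Submodule R V) (s : ℕ) (l : ℤ) : Submodule R V :=
  LinearMap.ker (d ^ s) ⊓ gr l

/-- The `s`-boundaries of an `N`-complex in degree `l`: `d^{N-s}(C_{l+N-s})`. -/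
def bdry (N : ℕ) (d : V →ₗ[R] V) (gr : ℤ → Submodule R V) (s : ℕ) (l : ℤ) : Submodule R V :=
  (gr (l + ((N - s : ℕ) : ℤ))).map (d ^ (N - s))

end

theorem stmt_3 (N : ℕ) (hN : 2 ≤ N) (R V W : Type) [Ring R]
    [AddCommGroup V] [Module R V] [AddCommGroup W] [Module R W]
    -- the `N`-complex `C`:
    (d : V →ₗ[R] V) (gr : ℤ → Submodule R V)
    (hgr : DirectSum.IsInternal gr) (hdeg : ∀ m : ℤ, ∀ x ∈ gr m, d x ∈ gr (m - 1))
    (hdN : d ^ N = 0)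
    -- the `N`-complex `C'`:
    (d' : W →ₗ[R] W) (gr' : ℤ → Submodule R W)
    (hgr' : DirectSum.IsInternal gr') (hdeg' : ∀ m : ℤ, ∀ x ∈ gr' m, d' x ∈ gr' (m - 1))
    (hdN' : d' ^ N = 0)
    -- morphisms `f, g : C → C'`:
    (f g : V →ₗ[R] W)
    (hfil : d' ∘ₗ f = f ∘ₗ d) (hgil : d' ∘ₗ g = g ∘ₗ d)
    (hfdeg : ∀ m : ℤ, ∀ x ∈ gr m, f x ∈ gr' m) (hgdeg : ∀ m : ℤ, ∀ x ∈ gr m, g x ∈ gr' m)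
    -- a homotopy `h` from `f` to `g`:
    (h : V →ₗ[R] W) (hhdeg : ∀ m : ℤ, ∀ x ∈ gr m, h x ∈ gr' (m + N - 1))
    (hhom : f - g = ∑ i ∈ Finset.range N, (d' ^ (N - 1 - i)) ∘ₗ h ∘ₗ (d ^ i))
    (s : ℕ) (hs1 : 1 ≤ s) (hs2 : s ≤ N - 1) (l : ℤ) :
    ∀ x ∈ cyc d gr s l, f x - g x ∈ bdry N d' gr' s l := by
  intro x hx
  obtain ⟨hx1, hx2⟩ := hx
  rw [SetLike.mem_coe, LinearMap.mem_ker] at hx1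
  have hp : ∀ (i : ℕ) (m : ℤ), ∀ x ∈ gr m, (d ^ i) x ∈ gr (m - i) := by
    intro i
    induction i with
    | zero => intro m x hx; simpa using hx
    | succ k ih =>
      intro m x hx
      rw [pow_succ', Module.End.mul_apply]
      have := hdeg _ _ (ih m x hx)
      rwa [show m - (k : ℤ) - 1 = m - ((k + 1 : ℕ) : ℤ) by push_cast; ring] at this
  have hp' : ∀ (i : ℕ) (m : ℤ), ∀ x ∈ gr' m, (d' ^ i) x ∈ gr' (m - i) := by
    intro i
    induction i with
    | zero => intro m x hx; simpa using hx
    | succ k ih =>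
      intro m x hx
      rw [pow_succ', Module.End.mul_apply]
      have := hdeg' _ _ (ih m x hx)
      rwa [show m - (k : ℤ) - 1 = m - ((k + 1 : ℕ) : ℤ) by push_cast; ring] at this
  have e : f x - g x = ∑ i ∈ Finset.range N, (d' ^ (N - 1 - i)) (h ((d ^ i) x)) := by
    rw [← LinearMap.sub_apply, hhom, LinearMap.sum_apply]
    rfl
  rw [e]
  refine Submodule.sum_mem _ fun i hi => ?_
  rw [Finset.mem_range] at hi
  by_cases his : s ≤ i
  · have h0 : (d ^ i) x = 0 := by
      rw [show i = (i - s) + s by omega, pow_add, Module.End.mul_apply, hx1, map_zero]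
    rw [h0, map_zero, map_zero]
    exact Submodule.zero_mem _
  · refine ⟨(d' ^ (s - 1 - i)) (h ((d ^ i) x)), ?_, ?_⟩
    · have := hp' (s - 1 - i) _ _ (hhdeg _ _ (hp i l x hx2))
      rwa [show l - (i : ℤ) + N - 1 - ((s - 1 - i : ℕ) : ℤ) = l + ((N - s : ℕ) : ℤ) by omega]
        at this
    · rw [← Module.End.mul_apply, ← pow_add, show N - s + (s - 1 - i) = N - 1 - i by omega]
end

section
/- Let N ≥ 2 and R a ring. An N-complex C of R-modules is acyclic (i.e. {}_sH_•(C) = 0 for all 1 ≤ s ≤ N−1) if and only if {}_sH_•(C) = 0 for some 1 ≤ s ≤ N−1. -/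
section
variable {R V : Type} [Ring R] [AddCommGroup V] [Module R V]

theorem aux_deg (d : V →ₗ[R] V) (gr : ℤ → Submodule R V)
    (hdeg : ∀ m : ℤ, ∀ x ∈ gr m, d x ∈ gr (m - 1)) (k : ℕ) :
    ∀ (m m' : ℤ), m' = m - k → ∀ x ∈ gr m, (d ^ k) x ∈ gr m' := by
  induction k with
  | zero => intro m m' h x hx; simp at h; subst h; simpa using hx
  | succ k ih =>
    intro m m' h x hx
    have h1 := hdeg _ _ (ih m (m - k) rfl x hx)
    rw [pow_succ']
    have h2 : m' = m - k - 1 := by push_cast at h; omega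
    rw [h2]; exact h1

theorem aux_add (d : V →ₗ[R] V) {a b c : ℕ} (h : c = a + b) (x : V) :
    (d ^ a) ((d ^ b) x) = (d ^ c) x := by
  subst h; rw [pow_add]; rfl

def PP (d : V →ₗ[R] V) (gr : ℤ → Submodule R V) (s t : ℕ) : Prop :=
  ∀ l : ℤ, ∀ x ∈ gr l, (d ^ s) x = 0 → ∃ y ∈ gr (l + t), (d ^ t) y = x

theorem aux_down (d : V →ₗ[R] V) (gr : ℤ → Submodule R V)
    (hdeg : ∀ m : ℤ, ∀ x ∈ gr m, d x ∈ gr (m - 1)) (s t : ℕ)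
    (h : PP d gr (s + 1) (t + 1)) : PP d gr s (t + 2) := by
  intro l x hx h0
  obtain ⟨y, hy, rfl⟩ := h l x hx (by rw [pow_succ', Module.End.mul_apply, h0, map_zero])
  rw [aux_add d rfl] at h0
  obtain ⟨z, hz, hzy⟩ := h (l + 1) ((d ^ t) y)
    (aux_deg d gr hdeg t _ _ (by push_cast; ring) y hy)
    (by rw [aux_add d (c := s + (t + 1)) (by omega)]; exact h0)
  refine ⟨z, ?_, ?_⟩
  · convert hz using 2; push_cast; ring
  · rw [← aux_add d (a := 1) (b := t + 1) (by omega), hzy, aux_add d (c := t + 1) (by omega)]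

theorem aux_up (d : V →ₗ[R] V) (gr : ℤ → Submodule R V)
    (hdeg : ∀ m : ℤ, ∀ x ∈ gr m, d x ∈ gr (m - 1)) (s t : ℕ)
    (h : PP d gr (s + 1) (t + 1)) : PP d gr (s + 2) t := by
  intro l x hx h0
  obtain ⟨y, hy, hyx⟩ := h (l - 1) (d x) (hdeg _ _ hx) (by
    have := aux_add d (a := s + 1) (b := 1) (c := s + 2) (by omega) x
    rw [pow_one] at this; rw [this, h0])
  have hy' : y ∈ gr (l + t) := by convert hy using 2; push_cast; ring
  have hk : d (x - (d ^ t) y) = 0 := by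
    rw [map_sub, ← hyx, pow_succ', Module.End.mul_apply, sub_self]
  obtain ⟨z, hz, hzx⟩ := h l (x - (d ^ t) y)
    (sub_mem hx (aux_deg d gr hdeg t _ _ (by ring) y hy'))
    (by rw [pow_succ, Module.End.mul_apply, hk, map_zero])
  refine ⟨y + d z, add_mem hy' ?_, ?_⟩
  · convert hdeg _ _ hz using 2; push_cast; ring
  · have := aux_add d (a := t) (b := 1) (c := t + 1) (by omega) z
    rw [pow_one] at this
    rw [map_add, this, hzx]; abel

theorem aux_iff (N : ℕ) (d : V →ₗ[R] V) (gr : ℤ → Submodule R V) (s : ℕ) :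
    (∀ l : ℤ, cyc d gr s l ≤ bdry N d gr s l) ↔ PP d gr s (N - s) := by
  constructor
  · intro h l x hx h0
    exact h l ⟨h0, hx⟩
  · rintro h l x ⟨h0, hx⟩
    exact h l x hx h0

end

theorem stmt_4 (N : ℕ) (hN : 2 ≤ N) (R V : Type) [Ring R] [AddCommGroup V] [Module R V]
    (d : V →ₗ[R] V) (gr : ℤ → Submodule R V)
    (hgr : DirectSum.IsInternal gr) (hdeg : ∀ m : ℤ, ∀ x ∈ gr m, d x ∈ gr (m - 1))
    (hdN : d ^ N = 0) :
    (∀ s : ℕ, 1 ≤ s → s ≤ N - 1 → ∀ l : ℤ, cyc d gr s l ≤ bdry N d gr s l) ↔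
      (∃ s : ℕ, 1 ≤ s ∧ s ≤ N - 1 ∧ ∀ l : ℤ, cyc d gr s l ≤ bdry N d gr s l) := by
  constructor
  · intro h
    exact ⟨1, le_rfl, by omega, h 1 le_rfl (by omega)⟩
  · rintro ⟨s, hs1, hsN, h⟩ r hr1 hrN
    rw [aux_iff] at h ⊢
    rcases le_total r s with hrs | hrs
    · revert hr1
      induction hrs using Nat.decreasingInduction with
      | self => intro _; exact h
      | of_succ k hk ih =>
        intro hk1
        have h1 := ih (by omega) (by omega)
        obtain ⟨t, ht⟩ : ∃ t, N - (k + 1) = t + 1 := ⟨N - (k + 1) - 1, by omega⟩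
        rw [ht] at h1
        have h2 := aux_down d gr hdeg k t h1
        rwa [show N - k = t + 2 by omega]
    · induction r, hrs using Nat.le_induction with
      | base => exact h
      | succ k hk ih =>
        have h1 := ih (by omega) (by omega)
        obtain ⟨t, ht⟩ : ∃ t, N - k = t + 1 := ⟨N - k - 1, by omega⟩
        obtain ⟨j, rfl⟩ : ∃ j, k = j + 1 := ⟨k - 1, by omega⟩
        rw [ht] at h1
        have h2 := aux_up d gr hdeg j t h1
        rwa [show N - (j + 1 + 1) = t by omega]
end

section
/- Let N ≥ 3, R a ring, and C an N-complex of R-modules. For any integers r, s ≥ 1 with r + s ≤ N−1, the cyclic six-term sequence {}_sH_•(C) →((i_*)^r) {}_{s+r}H_•(C) →((d_*)^s) {}_rH_•(C) →((i_*)^{N−s−r}) {}_{N−s}H_•(C) →((d_*)^r) {}_{N−s−r}H_•(C) →((i_*)^s) {}_{N−r}H_•(C) →((d_*)^{N−r−s}) {}_sH_•(C) is exact. -/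
section
variable {R V : Type} [Ring R] [AddCommGroup V] [Module R V]

theorem mem_bdry_aux {N : ℕ} {d : V →ₗ[R] V} {gr : ℤ → Submodule R V} {p k : ℕ} {l l' : ℤ}
    (h : p + k = N) (hl : l' = l + k) (x : V) :
    x ∈ bdry N d gr p l ↔ ∃ z ∈ gr l', (d ^ k) z = x := by
  have hk : N - p = k := by omega
  subst hl
  simp [bdry, hk, Submodule.mem_map]

theorem mem_cyc_aux {d : V →ₗ[R] V} {gr : ℤ → Submodule R V} {p : ℕ} {l : ℤ} (x : V) :
    x ∈ cyc d gr p l ↔ (d ^ p) x = 0 ∧ x ∈ gr l := by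
  simp [cyc]

theorem pow_mem_aux {d : V →ₗ[R] V} {gr : ℤ → Submodule R V}
    (hdeg : ∀ m : ℤ, ∀ x ∈ gr m, d x ∈ gr (m - 1)) (k : ℕ) :
    ∀ (m m' : ℤ), m = m' + k → ∀ x ∈ gr m, (d ^ k) x ∈ gr m' := by
  induction k with
  | zero => intro m m' h x hx; simp at h; subst h; simpa using hx
  | succ k ih =>
    intro m m' h x hx
    rw [pow_succ, Module.End.mul_apply]
    exact ih (m - 1) m' (by push_cast at h; omega) _ (hdeg _ _ hx)

theorem pow_add_aux (d : V →ₗ[R] V) (a b : ℕ) (x : V) :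
    (d ^ (a + b)) x = (d ^ a) ((d ^ b) x) := by
  rw [pow_add, Module.End.mul_apply]

theorem exactA {N : ℕ} {d : V →ₗ[R] V} {gr : ℤ → Submodule R V}
    (hdeg : ∀ m : ℤ, ∀ x ∈ gr m, d x ∈ gr (m - 1))
    (a b c p : ℕ) (habc : a + b + c = N) (hp : p = a + b) (n m : ℤ) (hm : n = m + a)
    (x : V) (hx : x ∈ cyc d gr p n) :
    (d ^ a) x ∈ bdry N d gr b m ↔ ∃ y ∈ cyc d gr a n, x - y ∈ bdry N d gr p n := by
  rw [mem_cyc_aux] at hx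
  rw [mem_bdry_aux (k := a + c) (l' := n + c) (by omega) (by push_cast; omega)]
  constructor
  · rintro ⟨z, hz, e⟩
    refine ⟨x - (d ^ c) z, ?_, ?_⟩
    · rw [mem_cyc_aux]
      refine ⟨?_, sub_mem hx.2 (pow_mem_aux hdeg c _ _ rfl z hz)⟩
      rw [map_sub, ← pow_add_aux, e, sub_self]
    · rw [mem_bdry_aux (k := c) (l' := n + c) (by omega) rfl]
      exact ⟨z, hz, by abel⟩
  · rintro ⟨y, hy, h⟩
    rw [mem_cyc_aux] at hy
    rw [mem_bdry_aux (k := c) (l' := n + c) (by omega) rfl] at h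
    obtain ⟨z, hz, e⟩ := h
    refine ⟨z, hz, ?_⟩
    rw [pow_add_aux, e, map_sub, hy.1, sub_zero]

theorem exactB {N : ℕ} {d : V →ₗ[R] V} {gr : ℤ → Submodule R V}
    (hdeg : ∀ m : ℤ, ∀ x ∈ gr m, d x ∈ gr (m - 1))
    (a b c p q : ℕ) (habc : a + b + c = N) (hp : p = a + b) (hq : q + a = N)
    (n m : ℤ) (hm : n = m + a)
    (x : V) (hx : x ∈ cyc d gr b m) :
    x ∈ bdry N d gr q m ↔ ∃ y ∈ cyc d gr p n, x - (d ^ a) y ∈ bdry N d gr b m := by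
  rw [mem_cyc_aux] at hx
  rw [mem_bdry_aux (k := a) (l' := n) hq hm]
  constructor
  · rintro ⟨y, hy, e⟩
    refine ⟨y, ?_, ?_⟩
    · rw [mem_cyc_aux, hp, add_comm, pow_add_aux, e]
      exact ⟨hx.1, hy⟩
    · rw [e, sub_self]; exact zero_mem _
  · rintro ⟨y, hy, h⟩
    rw [mem_cyc_aux] at hy
    rw [mem_bdry_aux (k := a + c) (l' := n + c) (by omega) (by push_cast; omega)] at h
    obtain ⟨z, hz, e⟩ := h
    refine ⟨y + (d ^ c) z, add_mem hy.2 (pow_mem_aux hdeg c _ _ rfl z hz), ?_⟩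
    rw [map_add, ← pow_add_aux, e]; abel

end

theorem stmt_6 (N : ℕ) (hN : 3 ≤ N) (R V : Type) [Ring R] [AddCommGroup V] [Module R V]
    (d : V →ₗ[R] V) (gr : ℤ → Submodule R V)
    (hgr : DirectSum.IsInternal gr) (hdeg : ∀ m : ℤ, ∀ x ∈ gr m, d x ∈ gr (m - 1))
    (hdN : d ^ N = 0)
    (r s : ℕ) (hr : 1 ≤ r) (hs : 1 ≤ s) (hrs : r + s ≤ N - 1) :
    -- exactness at `ₛ₊ᵣH_n`:
    (∀ n : ℤ, ∀ x ∈ cyc d gr (s + r) n,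
      ((d ^ s) x ∈ bdry N d gr r (n - s) ↔
        ∃ y ∈ cyc d gr s n, x - y ∈ bdry N d gr (s + r) n)) ∧
    -- exactness at `ᵣH_{n-s}`:
    (∀ n : ℤ, ∀ x ∈ cyc d gr r (n - s),
      (x ∈ bdry N d gr (N - s) (n - s) ↔
        ∃ y ∈ cyc d gr (s + r) n, x - (d ^ s) y ∈ bdry N d gr r (n - s))) ∧
    -- exactness at `ₙ₋ₛH_{n-s}`:
    (∀ n : ℤ, ∀ x ∈ cyc d gr (N - s) (n - s),
      ((d ^ r) x ∈ bdry N d gr (N - s - r) (n - s - r) ↔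
        ∃ y ∈ cyc d gr r (n - s), x - y ∈ bdry N d gr (N - s) (n - s))) ∧
    -- exactness at `ₙ₋ₛ₋ᵣH_{n-s-r}`:
    (∀ n : ℤ, ∀ x ∈ cyc d gr (N - s - r) (n - s - r),
      (x ∈ bdry N d gr (N - r) (n - s - r) ↔
        ∃ y ∈ cyc d gr (N - s) (n - s), x - (d ^ r) y ∈ bdry N d gr (N - s - r) (n - s - r))) ∧
    -- exactness at `ₙ₋ᵣH_{n-s-r}`:
    (∀ n : ℤ, ∀ x ∈ cyc d gr (N - r) (n - s - r),
      ((d ^ (N - r - s)) x ∈ bdry N d gr s (n - N) ↔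
        ∃ y ∈ cyc d gr (N - s - r) (n - s - r), x - y ∈ bdry N d gr (N - r) (n - s - r))) ∧
    -- exactness at `ₛH_{n-N}`:
    (∀ n : ℤ, ∀ x ∈ cyc d gr s (n - N),
      (x ∈ bdry N d gr (s + r) (n - N) ↔
        ∃ y ∈ cyc d gr (N - r) (n - s - r),
          x - (d ^ (N - r - s)) y ∈ bdry N d gr s (n - N))) := by
  refine ⟨?_, ?_, ?_, ?_, ?_, ?_⟩ <;> intro n x hx
  · exact exactA hdeg s r (N - s - r) _ (by omega) (by omega) _ _ (by omega) x hx
  · exact exactB hdeg s r (N - s - r) _ _ (by omega) (by omega) (by omega) _ _ (by omega) x hx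
  · exact exactA hdeg r (N - s - r) s _ (by omega) (by omega) _ _ (by omega) x hx
  · exact exactB hdeg r (N - s - r) s _ _ (by omega) (by omega) (by omega) _ _ (by omega) x hx
  · have e : N - r - s = N - s - r := by omega
    rw [e]
    exact exactA hdeg (N - s - r) s r _ (by omega) (by omega) _ _ (by omega) x hx
  · exact exactB hdeg (N - r - s) s r _ _ (by omega) (by omega) (by omega) _ _ (by omega) x hx
end

section
/- Let R be a commutative ring with 1 ≠ 0 and let q ∈ R be a distinguished primitive Nth root of unity. For all integers 0 ≤ s ≤ t < m the identity q^{(s+1)t} Σ_{i=s}^{t} binom(m−1−i, m−1−t)_q · binom(i, s)_q · q^{−i(s+1)} = binom(m, m+s−t)_q holds in R. -/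
/-! Statement 9 (the key `q`-identity, Lemma 3.4): for a distinguished primitive `N`-th root of
unity `q` (necessarily a unit) and all `0 ≤ s ≤ t < m`:
`q^{(s+1)t} Σ_{i=s}^{t} binom(m-1-i, m-1-t)_q binom(i,s)_q q^{-i(s+1)} = binom(m, m+s-t)_q`. -/

section
variable {R : Type} [CommRing R]

/-- `[n]_q = 1 + q + ⋯ + q^{n-1}`. -/
def qNum (q : R) (n : ℕ) : R := ∑ k ∈ Finset.range n, q ^ k

/-- The `q`-factorial `[n]_q!`. -/
def qFact (q : R) : ℕ → R
  | 0 => 1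
  | n + 1 => qFact q n * qNum q (n + 1)

/-- The `q`-binomial coefficients, defined by `binom(n,0)_q = 1`, `binom(0,m+1)_q = 0` and the
recurrence `binom(n+1,m+1)_q = binom(n,m)_q + q^{m+1} binom(n,m+1)_q`; in particular
`binom(n,n)_q = 1` and `binom(n,m)_q = 0` for `m > n`. -/
def qBinom (q : R) : ℕ → ℕ → R
  | _, 0 => 1
  | 0, _ + 1 => 0
  | n + 1, m + 1 => qBinom q n m + q ^ (m + 1) * qBinom q n (m + 1)

/-- `q` is a distinguished primitive `N`-th root of unity: `[N]_q = 0` and `[m]_q` is invertible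
for `1 ≤ m ≤ N-1`. -/
def IsDistinguishedRoot (N : ℕ) (q : R) : Prop :=
  qNum q N = 0 ∧ ∀ m : ℕ, 1 ≤ m → m ≤ N - 1 → IsUnit (qNum q m)

end

theorem qBinom_vanish {R : Type} [CommRing R] (q : R) : ∀ n m : ℕ, n < m → qBinom q n m = 0
  | _, 0, h => absurd h (Nat.not_lt_zero _)
  | 0, _ + 1, _ => by simp [qBinom]
  | n + 1, m + 1, h => by
    rw [qBinom, qBinom_vanish q n m (by omega), qBinom_vanish q n (m + 1) (by omega)]
    simp

theorem qBinom_zero_r {R : Type} [CommRing R] (q : R) (n : ℕ) : qBinom q n 0 = 1 := by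
  cases n <;> simp [qBinom]

theorem qBinom_rec {R : Type} [CommRing R] (q : R) (n m : ℕ) :
    qBinom q (n + 1) (m + 1) = qBinom q n m + q ^ (m + 1) * qBinom q n (m + 1) := by
  rw [qBinom]

theorem qSum_aux {R : Type} [CommRing R] (q : R) (s : ℕ) : ∀ n a : ℕ,
    ∑ j ∈ Finset.range (n + 1), q ^ ((s + 1) * (j - a)) * (qBinom q j a * qBinom q (n - j) s)
      = qBinom q (n + 1) (a + s + 1) := by
  intro n
  induction n with
  | zero =>
    intro a
    cases a with
    | zero =>
      simp only [zero_add, Finset.sum_range_one, qBinom_zero_r]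
      rw [qBinom, qBinom_vanish q 0 (s + 1) (by omega)]
      simp
    | succ a =>
      rw [qBinom_vanish q (0 + 1) _ (by omega)]
      simp [qBinom]
  | succ n ih =>
    intro a
    rw [Finset.sum_range_succ']
    cases a with
    | zero =>
      have h := ih 0
      rw [zero_add] at h
      rw [zero_add, qBinom_rec q (n + 1) s, ← h, Finset.mul_sum, add_comm]
      congr 1
      · simp [qBinom_zero_r]
      · refine Finset.sum_congr rfl fun j _ => ?_
        simp only [qBinom_zero_r, Nat.add_sub_add_right, Nat.sub_zero, zero_add]
        ring
    | succ a =>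
      have e : a + 1 + s + 1 = (a + s + 1) + 1 := by ring
      have h := ih (a + 1)
      rw [e] at h
      rw [e, qBinom_rec q (n + 1) (a + s + 1), ← ih a, ← h, Finset.mul_sum, ← Finset.sum_add_distrib]
      rw [qBinom_vanish q 0 (a + 1) (by omega)]
      simp only [qBinom_rec, zero_mul, mul_zero, add_zero]
      refine Finset.sum_congr rfl fun j _ => ?_
      simp only [Nat.add_sub_add_right]
      by_cases hj : a + 1 ≤ j
      · obtain ⟨k, rfl⟩ := Nat.exists_eq_add_of_le hj
        have e1 : a + 1 + k - a = k + 1 := by omega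
        have e2 : a + 1 + k - (a + 1) = k := by omega
        rw [e1, e2]
        ring
      · rw [qBinom_vanish q j (a + 1) (by omega)]
        ring

theorem stmt_9 (N : ℕ) (hN : 2 ≤ N) (R : Type) [CommRing R] (hR : (1 : R) ≠ 0)
    (q : Rˣ) (hq : IsDistinguishedRoot N (q : R))
    (s t m : ℕ) (hst : s ≤ t) (htm : t < m) :
    ((q ^ ((s + 1) * t : ℕ) : Rˣ) : R) *
      ∑ i ∈ Finset.Icc s t,
        qBinom (q : R) (m - 1 - i) (m - 1 - t) * qBinom (q : R) i s *
          ((q ^ (-(i * (s + 1) : ℤ)) : Rˣ) : R)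
      = qBinom (q : R) m (m + s - t) := by
  obtain ⟨a, rfl⟩ : ∃ a, m = t + a + 1 := ⟨m - t - 1, by omega⟩
  have e1 : t + a + 1 + s - t = a + s + 1 := by omega
  rw [e1, ← qSum_aux (q : R) s (t + a) a, ← Finset.sum_range_reflect, Finset.mul_sum]
  have hsub : Finset.Icc s t ⊆ Finset.range (t + a + 1) := by
    intro i hi
    simp only [Finset.mem_Icc, Finset.mem_range] at *
    omega
  rw [← Finset.sum_subset hsub]
  · refine Finset.sum_congr rfl fun i hi => ?_
    simp only [Finset.mem_Icc] at hi
    obtain ⟨k, rfl⟩ := Nat.exists_eq_add_of_le hi.2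
    have e2 : i + k + a + 1 - 1 - i = k + a := by omega
    have e3 : i + k + a + 1 - 1 - (i + k) = a := by omega
    have e4 : k + a - a = k := by omega
    have e5 : i + k + a - (k + a) = i := by omega
    rw [e2, e3, e4, e5]
    have hp : ((q ^ ((s + 1) * (i + k) : ℕ) : Rˣ) : R) * ((q ^ (-(i * (s + 1) : ℤ)) : Rˣ) : R)
        = (q : R) ^ ((s + 1) * k) := by
      rw [← Units.val_mul, ← Units.val_pow_eq_pow_val, ← zpow_natCast q ((s + 1) * (i + k)),
        ← zpow_add, ← zpow_natCast q ((s + 1) * k)]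
      congr 2
      push_cast
      ring
    rw [← hp]
    ring
  · intro i hi hn
    simp only [Finset.mem_Icc, Finset.mem_range] at hi hn
    by_cases h : i < s
    · rw [qBinom_vanish (q : R) (t + a - (t + a + 1 - 1 - i)) s (by omega)]
      simp
    · rw [qBinom_vanish (q : R) (t + a + 1 - 1 - i) a (by omega)]
      simp
end

section
/- Let R be a commutative ring with a distinguished primitive Nth root of unity q, and let h be a homotopy between two morphisms of N-complexes f, g : C → C'. Then for any N-complex D, the map h⊗D : C⊗D → C'⊗D given by x⊗y ↦ h(x)⊗y is a homotopy between f⊗D and g⊗D. Similarly, D⊗f and D⊗g : D⊗C → D⊗C' are homotopic via the map x⊗y ↦ q^{−a} x⊗h(y) for homogeneous elements x ∈ D_a and y ∈ C. -/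
open scoped TensorProduct

/-- Gaussian binomial coefficients. -/
def gaussC {R : Type} [CommRing R] (q : R) : ℕ → ℕ → R
  | 0, 0 => 1
  | 0, _ + 1 => 0
  | _ + 1, 0 => 1
  | n + 1, k + 1 => gaussC q n k + q ^ (k + 1) * gaussC q n (k + 1)

theorem gaussC_zero {R : Type} [CommRing R] (q : R) (n : ℕ) : gaussC q n 0 = 1 := by
  cases n <;> simp [gaussC]

theorem gaussC_gt {R : Type} [CommRing R] (q : R) (n : ℕ) :
    ∀ k, n < k → gaussC q n k = 0 := by
  induction n with
  | zero => intro k hk; obtain ⟨k, rfl⟩ := Nat.exists_eq_succ_of_ne_zero hk.ne'; simp [gaussC]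
  | succ n ih =>
    intro k hk
    obtain ⟨k, rfl⟩ := Nat.exists_eq_succ_of_ne_zero (by omega : k ≠ 0)
    simp [gaussC, ih k (by omega), ih (k+1) (by omega)]

/-- q-integer -/
def qInt {R : Type} [CommRing R] (q : R) (n : ℕ) : R := ∑ i ∈ Finset.range n, q ^ i

/-- q-factorial -/
def qFac {R : Type} [CommRing R] (q : R) (n : ℕ) : R := ∏ i ∈ Finset.range n, qInt q (i + 1)

theorem qInt_add {R : Type} [CommRing R] (q : R) (k m : ℕ) :
    qInt q (k + m) = qInt q k + q ^ k * qInt q m := by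
  simp [qInt, Finset.sum_range_add, Finset.mul_sum, pow_add]

theorem gaussC_self {R : Type} [CommRing R] (q : R) (n : ℕ) : gaussC q n n = 1 := by
  induction n with
  | zero => simp [gaussC]
  | succ n ih => simp [gaussC, ih, gaussC_gt q n (n+1) (by omega)]

theorem gaussC_fac {R : Type} [CommRing R] (q : R) (n : ℕ) :
    ∀ k m, k + m = n → qFac q k * qFac q m * gaussC q n k = qFac q n := by
  induction n with
  | zero =>
    intro k m h
    obtain ⟨rfl, rfl⟩ : k = 0 ∧ m = 0 := by omega
    simp [qFac, gaussC]
  | succ n ih =>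
    intro k m h
    rcases k with _ | k
    · obtain rfl : m = n + 1 := by omega
      simp [gaussC_zero, qFac]
    rcases m with _ | m
    · obtain rfl : k = n := by omega
      simp [gaussC_self, qFac]
    have h1 := ih k (m+1) (by omega)
    have h2 := ih (k+1) m (by omega)
    have e : ∀ j, qFac q (j+1) = qFac q j * qInt q (j+1) := fun j => by
      simp [qFac, Finset.prod_range_succ]
    have h3 : qInt q (n+1) = qInt q (k+1) + q^(k+1) * qInt q (m+1) := by
      rw [← qInt_add, h]
    simp only [gaussC]
    rw [e n, h3]
    rw [e m] at h1 ⊢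
    rw [e k] at h2 ⊢
    linear_combination qInt q (k+1) * h1 + q^(k+1) * qInt q (m+1) * h2

theorem gaussC_vanish {R : Type} [CommRing R] (q : R) (N : ℕ)
    (hq0 : ∑ i ∈ Finset.range N, (q : R) ^ i = 0)
    (hqu : ∀ m : ℕ, 1 ≤ m → m ≤ N - 1 → IsUnit (∑ i ∈ Finset.range m, (q : R) ^ i))
    (k : ℕ) (hk : 0 < k) (hkN : k < N) : gaussC q N k = 0 := by
  have hu : ∀ j, j < N → IsUnit (qFac q j) := by
    intro j hj
    unfold qFac
    induction j with
    | zero => simp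
    | succ j ih =>
      rw [Finset.prod_range_succ]
      exact (ih (by omega)).mul (hqu (j+1) (by omega) (by omega))
  have h0 : qFac q N = 0 := by
    obtain ⟨M, rfl⟩ := Nat.exists_eq_succ_of_ne_zero (by omega : N ≠ 0)
    rw [qFac, Finset.prod_range_succ]
    have : qInt q (M+1) = 0 := hq0
    rw [this, mul_zero]
  have h := gaussC_fac q N k (N - k) (by omega)
  rw [h0] at h
  exact (((hu k hkN).mul (hu (N-k) (by omega))).mul_right_eq_zero).1 h

theorem comm_pow {R : Type} [CommRing R] {S : Type} [Ring S] [Algebra R S] (q : R) (A B : S)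
    (hBA : B * A = q • (A * B)) (k : ℕ) : B * A ^ k = q ^ k • (A ^ k * B) := by
  induction k with
  | zero => simp
  | succ k ih =>
    rw [pow_succ, ← mul_assoc, ih, smul_mul_assoc, mul_assoc, hBA, mul_smul_comm, smul_smul,
      ← pow_succ, mul_assoc]

theorem q_binom {R : Type} [CommRing R] {S : Type} [Ring S] [Algebra R S] (q : R) (A B : S)
    (hBA : B * A = q • (A * B)) (n : ℕ) :
    (A + B) ^ n = ∑ k ∈ Finset.range (n + 1), gaussC q n k • (A ^ k * B ^ (n - k)) := by
  induction n with
  | zero => simp [gaussC]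
  | succ n ih =>
    rw [pow_succ', ih, add_mul, Finset.mul_sum, Finset.mul_sum,
      Finset.sum_range_succ' _ (n+1)]
    have e1 : ∀ k ∈ Finset.range (n+1), A * gaussC q n k • (A ^ k * B ^ (n - k)) =
        gaussC q n k • (A ^ (k+1) * B ^ (n + 1 - (k+1))) := by
      intro k hk
      rw [mul_smul_comm, ← mul_assoc, ← pow_succ', Nat.add_sub_add_right]
    have e2 : ∀ k ∈ Finset.range (n+1), B * gaussC q n k • (A ^ k * B ^ (n - k)) =
        (q ^ k * gaussC q n k) • (A ^ k * B ^ (n + 1 - k)) := by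
      intro k hk
      have : n + 1 - k = (n - k) + 1 := by have := Finset.mem_range.1 hk; omega
      rw [mul_smul_comm, ← mul_assoc, comm_pow q A B hBA, smul_mul_assoc, smul_smul, this,
        pow_succ', mul_assoc, mul_comm]
    rw [Finset.sum_congr rfl e1, Finset.sum_congr rfl e2]
    have e3 : ∑ k ∈ Finset.range (n+1), (q ^ k * gaussC q n k) • (A ^ k * B ^ (n + 1 - k))
        = ∑ k ∈ Finset.range (n+1+1), (q ^ k * gaussC q n k) • (A ^ k * B ^ (n + 1 - k)) := by
      rw [Finset.sum_range_succ _ (n+1), gaussC_gt q n (n+1) (by omega)]; simp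
    rw [e3, Finset.sum_range_succ' _ (n+1), ← add_assoc, ← Finset.sum_add_distrib]
    simp [gaussC, gaussC_zero, add_smul]

theorem q_frob {R : Type} [CommRing R] {S : Type} [Ring S] [Algebra R S] (q : R) (A B : S)
    (hBA : B * A = q • (A * B)) (N : ℕ) (hN : 2 ≤ N)
    (hq0 : ∑ i ∈ Finset.range N, (q : R) ^ i = 0)
    (hqu : ∀ m : ℕ, 1 ≤ m → m ≤ N - 1 → IsUnit (∑ i ∈ Finset.range m, (q : R) ^ i)) :
    (A + B) ^ N = A ^ N + B ^ N := by
  rw [q_binom q A B hBA, Finset.sum_range_succ, gaussC_self]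
  obtain ⟨M, rfl⟩ := Nat.exists_eq_succ_of_ne_zero (by omega : N ≠ 0)
  rw [Finset.sum_range_succ', Finset.sum_eq_zero]
  · simp [gaussC_zero, add_comm]
  · intro k hk
    have := Finset.mem_range.1 hk
    rw [gaussC_vanish q _ hq0 hqu (k+1) (by omega) (by omega), zero_smul]

theorem off_diag {R : Type} [CommRing R] {M M' E : Type} [AddCommGroup M] [Module R M]
    [AddCommGroup M'] [Module R M'] [AddCommGroup E] [Module R E]
    (X : M →ₗ[R] M) (X' : M' →ₗ[R] M') (H : M →ₗ[R] M') (Y : E →ₗ[R] E)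
    (i : M →ₗ[R] E) (j : M' →ₗ[R] E) (p : E →ₗ[R] M')
    (hi : Y ∘ₗ i = i ∘ₗ X + j ∘ₗ H) (hj : Y ∘ₗ j = j ∘ₗ X')
    (hpi : p ∘ₗ i = 0) (hpj : p ∘ₗ j = LinearMap.id) (n : ℕ) :
    p ∘ₗ (Y ^ n) ∘ₗ i = ∑ k ∈ Finset.range n, (X' ^ (n - 1 - k)) ∘ₗ H ∘ₗ (X ^ k) := by
  have hi' : ∀ x, Y (i x) = i (X x) + j (H x) := fun x => LinearMap.congr_fun hi x
  have hj' : ∀ x, Y (j x) = j (X' x) := fun x => LinearMap.congr_fun hj x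
  have key : ∀ n x, (Y ^ n) (i x) = i ((X ^ n) x) +
      j (∑ k ∈ Finset.range n, (X' ^ (n - 1 - k)) (H ((X ^ k) x))) := by
    intro n x
    induction n with
    | zero => simp
    | succ n ih =>
      rw [pow_succ', Module.End.mul_apply, ih, map_add, hi', hj', pow_succ' X,
        Module.End.mul_apply, Finset.sum_range_succ, add_assoc, ← map_add, map_sum, add_comm (H _)]
      congr 3
      · apply Finset.sum_congr rfl
        intro k hk
        have : n + 1 - 1 - k = (n - 1 - k) + 1 := by have := Finset.mem_range.1 hk; omega
        rw [this, pow_succ', Module.End.mul_apply]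
      · simp
  ext x
  have h1 : ∀ x, p (i x) = 0 := fun x => LinearMap.congr_fun hpi x
  have h2 : ∀ x, p (j x) = x := fun x => LinearMap.congr_fun hpj x
  simp [key, h1, h2]

theorem gr_ext {R : Type} [CommRing R] {V W : Type} [AddCommGroup V] [Module R V]
    [AddCommGroup W] [Module R W] (gr : ℤ → Submodule R V) (hgr : DirectSum.IsInternal gr)
    (a b : V →ₗ[R] W) (hab : ∀ m, ∀ x ∈ gr m, a x = b x) : a = b := by
  have h : (⨆ m, gr m) ≤ LinearMap.eqLocus a b := iSup_le fun m x hx => hab m x hx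
  rw [hgr.submodule_iSup_eq_top] at h
  ext x
  exact h trivial

theorem mu_d {R : Type} [CommRing R] (q : Rˣ) {V : Type} [AddCommGroup V] [Module R V]
    (d : V →ₗ[R] V) (gr : ℤ → Submodule R V)
    (hgr : DirectSum.IsInternal gr) (hdeg : ∀ m : ℤ, ∀ x ∈ gr m, d x ∈ gr (m - 1))
    (μ : V →ₗ[R] V) (hμ : ∀ a : ℤ, ∀ x ∈ gr a, μ x = ((q ^ (-a) : Rˣ) : R) • x) :
    μ ∘ₗ d = (q : R) • (d ∘ₗ μ) := by
  apply gr_ext gr hgr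
  intro m x hx
  simp only [LinearMap.comp_apply, LinearMap.smul_apply]
  rw [hμ _ _ (hdeg m x hx), hμ m x hx, map_smul, smul_smul, ← Units.val_mul, ← zpow_one_add]
  congr 3
  ring

theorem stmt_10 (N : ℕ) (hN : 2 ≤ N) (R : Type) [CommRing R] (hR : (1 : R) ≠ 0)
    -- a distinguished primitive `N`-th root of unity (necessarily a unit):
    (q : Rˣ)
    (hq0 : ∑ i ∈ Finset.range N, (q : R) ^ i = 0)
    (hqu : ∀ m : ℕ, 1 ≤ m → m ≤ N - 1 → IsUnit (∑ i ∈ Finset.range m, (q : R) ^ i))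
    (V V' U : Type) [AddCommGroup V] [Module R V] [AddCommGroup V'] [Module R V']
    [AddCommGroup U] [Module R U]
    -- the `N`-complex `C`:
    (dC : V →ₗ[R] V) (grC : ℤ → Submodule R V)
    (hgrC : DirectSum.IsInternal grC) (hdegC : ∀ m : ℤ, ∀ x ∈ grC m, dC x ∈ grC (m - 1))
    (hdNC : dC ^ N = 0)
    -- the `N`-complex `C'`:
    (dC' : V' →ₗ[R] V') (grC' : ℤ → Submodule R V')
    (hgrC' : DirectSum.IsInternal grC') (hdegC' : ∀ m : ℤ, ∀ x ∈ grC' m, dC' x ∈ grC' (m - 1))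
    (hdNC' : dC' ^ N = 0)
    -- the `N`-complex `D`:
    (dU : U →ₗ[R] U) (grU : ℤ → Submodule R U)
    (hgrU : DirectSum.IsInternal grU) (hdegU : ∀ m : ℤ, ∀ x ∈ grU m, dU x ∈ grU (m - 1))
    (hdNU : dU ^ N = 0)
    -- the grading operators `x ↦ q^{-a} x`:
    (μC : V →ₗ[R] V) (hμC : ∀ a : ℤ, ∀ x ∈ grC a, μC x = ((q ^ (-a) : Rˣ) : R) • x)
    (μC' : V' →ₗ[R] V') (hμC' : ∀ a : ℤ, ∀ x ∈ grC' a, μC' x = ((q ^ (-a) : Rˣ) : R) • x)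
    (μU : U →ₗ[R] U) (hμU : ∀ a : ℤ, ∀ x ∈ grU a, μU x = ((q ^ (-a) : Rˣ) : R) • x)
    -- morphisms `f, g : C → C'`:
    (f g : V →ₗ[R] V')
    (hfd : dC' ∘ₗ f = f ∘ₗ dC) (hgd : dC' ∘ₗ g = g ∘ₗ dC)
    (hfdeg : ∀ m : ℤ, ∀ x ∈ grC m, f x ∈ grC' m) (hgdeg : ∀ m : ℤ, ∀ x ∈ grC m, g x ∈ grC' m)
    -- a homotopy `h` from `f` to `g`:
    (h : V →ₗ[R] V') (hhdeg : ∀ m : ℤ, ∀ x ∈ grC m, h x ∈ grC' (m + N - 1))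
    (hhom : f - g = ∑ i ∈ Finset.range N, (dC' ^ (N - 1 - i)) ∘ₗ h ∘ₗ (dC ^ i)) :
    -- `h ⊗ D` is a homotopy from `f ⊗ D` to `g ⊗ D`:
    (TensorProduct.map f (LinearMap.id : U →ₗ[R] U) - TensorProduct.map g LinearMap.id =
      ∑ i ∈ Finset.range N,
        ((TensorProduct.map dC' LinearMap.id + TensorProduct.map μC' dU) ^ (N - 1 - i)) ∘ₗ
          (TensorProduct.map h (LinearMap.id : U →ₗ[R] U)) ∘ₗ
          ((TensorProduct.map dC LinearMap.id + TensorProduct.map μC dU) ^ i)) ∧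
    -- `μ_D ⊗ h` is a homotopy from `D ⊗ f` to `D ⊗ g`:
    (TensorProduct.map (LinearMap.id : U →ₗ[R] U) f - TensorProduct.map LinearMap.id g =
      ∑ i ∈ Finset.range N,
        ((TensorProduct.map dU LinearMap.id + TensorProduct.map μU dC') ^ (N - 1 - i)) ∘ₗ
          (TensorProduct.map μU h) ∘ₗ
          ((TensorProduct.map dU LinearMap.id + TensorProduct.map μU dC) ^ i)) := by
  have hqN : (q : R) ^ N = 1 := by
    have := geom_sum_mul (q : R) N
    rw [hq0, zero_mul] at this
    exact (sub_eq_zero.1 this.symm)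
  have hqN' : q ^ N = 1 := by ext; simpa using hqN
  have c1 := mu_d q dC grC hgrC hdegC μC hμC
  have c2 := mu_d q dC' grC' hgrC' hdegC' μC' hμC'
  have c3 := mu_d q dU grU hgrU hdegU μU hμU
  have c4 : μC' ∘ₗ h = (q : R) • (h ∘ₗ μC) := by
    apply gr_ext grC hgrC
    intro m x hx
    simp only [LinearMap.comp_apply, LinearMap.smul_apply]
    rw [hμC' _ _ (hhdeg m x hx), hμC m x hx, map_smul, smul_smul, ← Units.val_mul, ← zpow_one_add]
    congr 2
    have : -(m + (N : ℤ) - 1) = (1 + -m) + -(N : ℤ) := by ring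
    rw [this, zpow_add, zpow_neg, zpow_natCast, hqN']
    simp
  have hμN : μU ^ N = 1 := by
    apply gr_ext grU hgrU
    intro m x hx
    have key : ∀ n : ℕ, (μU ^ n) x = (((q ^ (-m)) ^ n : Rˣ) : R) • x := by
      intro n
      induction n with
      | zero => simp
      | succ n ih =>
        rw [pow_succ', Module.End.mul_apply, ih, map_smul, hμU m x hx, smul_smul, pow_succ,
          Units.val_mul]
    rw [key, ← zpow_natCast, zpow_comm, zpow_natCast, hqN']
    simp
  -- the cone-like object
  let dE : (V × V') →ₗ[R] (V × V') :=
    LinearMap.prod (dC ∘ₗ LinearMap.fst R V V')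
      (h ∘ₗ LinearMap.fst R V V' + dC' ∘ₗ LinearMap.snd R V V')
  let μE : (V × V') →ₗ[R] (V × V') := LinearMap.prodMap μC μC'
  let i := LinearMap.inl R V V'
  let j := LinearMap.inr R V V'
  let p := LinearMap.snd R V V'
  have hi : dE ∘ₗ i = i ∘ₗ dC + j ∘ₗ h := by ext x <;> simp [dE, i, j]
  have hj : dE ∘ₗ j = j ∘ₗ dC' := by ext x <;> simp [dE, j]
  have hpi : p ∘ₗ i = 0 := by ext x; simp [p, i]
  have hpj : p ∘ₗ j = LinearMap.id := by ext x; simp [p, j]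
  have hμi : μE ∘ₗ i = i ∘ₗ μC := by ext x <;> simp [μE, i]
  have hμj : μE ∘ₗ j = j ∘ₗ μC' := by ext x <;> simp [μE, j]
  have hoff : p ∘ₗ (dE ^ N) ∘ₗ i = f - g := by
    rw [off_diag dC dC' h dE i j p hi hj hpi hpj N, hhom]
  have cE : μE ∘ₗ dE = (q : R) • (dE ∘ₗ μE) := by
    have k1 : ∀ x, μC (dC x) = (q : R) • dC (μC x) := fun x => LinearMap.congr_fun c1 x
    have k2 : ∀ x, μC' (dC' x) = (q : R) • dC' (μC' x) := fun x => LinearMap.congr_fun c2 x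
    have k4 : ∀ x, μC' (h x) = (q : R) • h (μC x) := fun x => LinearMap.congr_fun c4 x
    ext x <;> simp [μE, dE, k1, k2, k4]
  constructor
  · have hF : (TensorProduct.map dE (LinearMap.id : U →ₗ[R] U) + TensorProduct.map μE dU) ^ N
        = TensorProduct.map (dE ^ N) LinearMap.id := by
      refine (q_frob (S := Module.End R ((V × V') ⊗[R] U)) (q : R) _ _ ?_ N hN hq0 hqu).trans ?_
      swap
      · rw [TensorProduct.map_pow, TensorProduct.map_pow, hdNU, TensorProduct.map_zero_right,
          add_zero]
        congr 1
        exact one_pow N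
      · rw [Module.End.mul_eq_comp, Module.End.mul_eq_comp, ← TensorProduct.map_comp,
          ← TensorProduct.map_comp, cE, TensorProduct.map_smul_left]
        rfl
    rw [← off_diag _ _ _
      (TensorProduct.map dE (LinearMap.id : U →ₗ[R] U) + TensorProduct.map μE dU)
      (TensorProduct.map i LinearMap.id) (TensorProduct.map j LinearMap.id)
      (TensorProduct.map p LinearMap.id) _ _ _ _ N, hF]
    · rw [← TensorProduct.map_comp, ← TensorProduct.map_comp, hoff]
      ext x y
      simp [TensorProduct.sub_tmul]
    · simp only [LinearMap.add_comp, LinearMap.comp_add, ← TensorProduct.map_comp, hi, hμi,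
        TensorProduct.map_add_left, LinearMap.id_comp, LinearMap.comp_id]
      abel
    · simp only [LinearMap.add_comp, LinearMap.comp_add, ← TensorProduct.map_comp, hj, hμj,
        TensorProduct.map_add_left, LinearMap.id_comp, LinearMap.comp_id]
    · rw [← TensorProduct.map_comp, hpi, TensorProduct.map_zero_left]
    · rw [← TensorProduct.map_comp, hpj, LinearMap.id_comp, TensorProduct.map_id]
  · have hF : (TensorProduct.map dU (LinearMap.id : V × V' →ₗ[R] V × V') +
        TensorProduct.map μU dE) ^ N = TensorProduct.map LinearMap.id (dE ^ N) := by
      refine (q_frob (S := Module.End R (U ⊗[R] (V × V'))) (q : R) _ _ ?_ N hN hq0 hqu).trans ?_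
      swap
      · rw [TensorProduct.map_pow, TensorProduct.map_pow, hdNU, TensorProduct.map_zero_left,
          zero_add, hμN]
        rfl
      · rw [Module.End.mul_eq_comp, Module.End.mul_eq_comp, ← TensorProduct.map_comp,
          ← TensorProduct.map_comp, c3, TensorProduct.map_smul_left]
        rfl
    rw [← off_diag _ _ _
      (TensorProduct.map dU (LinearMap.id : V × V' →ₗ[R] V × V') + TensorProduct.map μU dE)
      (TensorProduct.map LinearMap.id i) (TensorProduct.map LinearMap.id j)
      (TensorProduct.map LinearMap.id p) _ _ _ _ N, hF]
    · rw [← TensorProduct.map_comp, ← TensorProduct.map_comp, hoff]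
      ext x y
      simp [TensorProduct.tmul_sub]
    · simp only [LinearMap.add_comp, LinearMap.comp_add, ← TensorProduct.map_comp, hi,
        TensorProduct.map_add_right, LinearMap.id_comp, LinearMap.comp_id]
      abel
    · simp only [LinearMap.add_comp, LinearMap.comp_add, ← TensorProduct.map_comp, hj,
        TensorProduct.map_add_right, LinearMap.id_comp, LinearMap.comp_id]
    · rw [← TensorProduct.map_comp, hpi, TensorProduct.map_zero_right]
    · rw [← TensorProduct.map_comp, hpj, LinearMap.id_comp, TensorProduct.map_id]
end

section
/- Let p be a prime, k a field of characteristic p, and R = k[x_1,…,x_n] the polynomial ring with distinguished primitive pth root of unity q = 1. Then for every 1 ≤ s ≤ p−1, the total k-dimension of the homology of the Koszul p-complex is finite: dim_k {}_sH_•(K^p_•(x_1,…,x_n)) < ∞. -/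
/-! Statement 11 (Proposition 4.5): let `p` be a prime, `k` a field of characteristic `p` and
`R = k[x_1,…,x_n]` (with `q = 1`).  Then for every `1 ≤ s ≤ p-1` the total homology
`ₛH(K^p_•(x_1,…,x_n)) = ker d^s / im d^{p-s}` of the Koszul `p`-complex has finite
`k`-dimension.

The Koszul `p`-complex `K^p_•(x_1,…,x_n) = K^p_•(x_1) ⊗ ⋯ ⊗ K^p_•(x_n)` is the free `R`-module
on basis `e_c`, `c : Fin n → Fin p` (with `e_c` in degree `Σ_i c_i`), and (since `q = 1`,
`char k = p`) the tensor-product differential is `d e_c = Σ_{i : c_i > 0} x_i e_{c - δ_i}`;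
in coordinates `(d v) c = Σ_{i : c_i + 1 < p} x_i · v (c + δ_i)`. -/

/-- The differential of the Koszul `p`-complex `K^p_•(x_1,…,x_n)`, as a `k`-linear
endomorphism of the free module `(Fin n → Fin p) → k[x_1,…,x_n]`. -/
noncomputable def koszulD (p n : ℕ) (k : Type) [Field k] :
    ((Fin n → Fin p) → MvPolynomial (Fin n) k) →ₗ[k]
      ((Fin n → Fin p) → MvPolynomial (Fin n) k) :=
  LinearMap.pi fun c =>
    ∑ i : Fin n,
      if h : (c i : ℕ) + 1 < p then
        (MvPolynomial.X i : MvPolynomial (Fin n) k) •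
          (LinearMap.proj (Function.update c i ⟨(c i : ℕ) + 1, h⟩) :
            ((Fin n → Fin p) → MvPolynomial (Fin n) k) →ₗ[k] MvPolynomial (Fin n) k)
      else 0


namespace Kz

theorem choose_char {S : Type*} [Ring S] (p : ℕ) (hp : p.Prime) (h0 : (p : S) = 0) :
    ∀ j : ℕ, j ≤ p - 1 → (((p - 1).choose j : ℕ) : S) = (-1) ^ j := by
  intro j
  induction j with
  | zero => intro _; simp
  | succ j ih =>
    intro hj
    have h1 := ih (by omega)
    have h2 : p.choose (j + 1) = (p - 1).choose j + (p - 1).choose (j + 1) := by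
      obtain ⟨q, rfl⟩ : ∃ q, p = q + 1 := ⟨p - 1, by have := hp.pos; omega⟩
      simp [Nat.choose_succ_succ]
    have h3 : ((p.choose (j + 1) : ℕ) : S) = 0 := by
      obtain ⟨t, ht⟩ := hp.dvd_choose_self (k := j + 1) (by omega) (by omega)
      rw [ht]; push_cast; rw [h0, zero_mul]
    rw [h2] at h3
    push_cast at h3
    rw [h1] at h3
    rw [pow_succ]
    have := eq_neg_of_add_eq_zero_right h3
    rw [this]; simp

theorem sub_pow_char {S : Type*} [Ring S] (p : ℕ) (hp : p.Prime) (h0 : (p : S) = 0)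
    (x y : S) (h : Commute x y) :
    (x - y) ^ (p - 1) = ∑ j ∈ Finset.range p, y ^ j * x ^ (p - 1 - j) := by
  have hpp : p - 1 + 1 = p := by have := hp.pos; omega
  rw [sub_eq_neg_add, Commute.add_pow (h.symm.neg_left), hpp]
  refine Finset.sum_congr rfl fun j hj => ?_
  rw [Finset.mem_range] at hj
  rw [choose_char p hp h0 j (by omega), neg_pow y j]
  have hc : Commute ((-1 : S) ^ j) (y ^ j * x ^ (p - 1 - j)) :=
    (Commute.neg_one_left _).pow_left j
  rw [mul_assoc, mul_assoc, ← mul_assoc (y ^ j), ← hc.eq, ← mul_assoc, ← pow_add, ← two_mul, pow_mul]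
  simp

/-- homotopy sum depends only on `A`. -/
theorem homotopy {E : Type*} [Ring E] (p : ℕ) (hp : p.Prime) (h0 : (p : E) = 0)
    (A B h : E) (hAB : Commute A B) (hB : Commute h B) :
    ∑ j ∈ Finset.range p, (A + B) ^ (p - 1 - j) * h * (A + B) ^ j =
    ∑ j ∈ Finset.range p, A ^ (p - 1 - j) * h * A ^ j := by
  have key : ∀ D : E, ∑ j ∈ Finset.range p, D ^ (p - 1 - j) * h * D ^ j =
      ((LinearMap.mulLeft ℤ D - LinearMap.mulRight ℤ D) ^ (p - 1)) h := by
    intro D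
    have hE : ((p : ℕ) : Module.End ℤ E) = 0 := by
      ext x
      simp [h0, nsmul_eq_mul]
    rw [sub_pow_char p hp hE _ _ (LinearMap.commute_mulLeft_right D D), LinearMap.sum_apply]
    refine Finset.sum_congr rfl fun j _ => ?_
    simp [LinearMap.pow_mulLeft, LinearMap.pow_mulRight, mul_assoc]
  rw [key, key]
  have : ∀ m : ℕ, ((LinearMap.mulLeft ℤ (A + B) - LinearMap.mulRight ℤ (A + B)) ^ m) h =
      ((LinearMap.mulLeft ℤ A - LinearMap.mulRight ℤ A) ^ m) h ∧
      Commute (((LinearMap.mulLeft ℤ A - LinearMap.mulRight ℤ A) ^ m) h) B := by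
    intro m
    induction m with
    | zero => simpa using hB
    | succ m ih =>
      rw [pow_succ', pow_succ', Module.End.mul_apply, Module.End.mul_apply, ih.1]
      set y := ((LinearMap.mulLeft ℤ A - LinearMap.mulRight ℤ A) ^ m) h
      have hy := ih.2
      simp only [LinearMap.sub_apply, LinearMap.mulLeft_apply, LinearMap.mulRight_apply]
      refine ⟨?_, (hAB.mul_left hy).sub_left (hy.mul_left hAB)⟩
      rw [add_mul, mul_add, hy.eq]; abel
  exact (this _).1

open MvPolynomial in
theorem fin_of_kill {n m : ℕ} {k : Type*} [Field k] {Q : Type*} [AddCommGroup Q]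
    [Module (MvPolynomial (Fin n) k) Q] [Module k Q] [IsScalarTower k (MvPolynomial (Fin n) k) Q]
    [Module.Finite (MvPolynomial (Fin n) k) Q]
    (hk : ∀ (i : Fin n) (q : Q), (X i ^ m : MvPolynomial (Fin n) k) • q = 0) :
    Module.Finite k Q := by
  obtain ⟨G, hG⟩ := (Module.Finite.fg_top (R := MvPolynomial (Fin n) k) (M := Q))
  let f : (Fin n → Fin m) × G → Q := fun x =>
    (monomial (Finsupp.equivFunOnFinite.symm fun i => ((x.1 i : Fin m) : ℕ)) (1 : k)) • (x.2 : Q)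
  have hT : ∀ (r : MvPolynomial (Fin n) k) (g : Q), g ∈ G →
      r • g ∈ Submodule.span k (Set.range f) := by
    intro r g hg
    induction r using MvPolynomial.induction_on' with
    | monomial e a =>
      have h1 : (monomial e a : MvPolynomial (Fin n) k) = a • monomial e 1 := by
        simp [smul_monomial]
      rw [h1, smul_assoc]
      refine Submodule.smul_mem _ _ ?_
      by_cases he : ∀ i, e i < m
      · refine Submodule.subset_span ⟨(fun i => ⟨e i, he i⟩, ⟨g, hg⟩), ?_⟩
        simp only [f]
        congr 2
        ext i; simp
      · push Not at he
        obtain ⟨i, hi⟩ := he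
        have h2 : (monomial e (1 : k) : MvPolynomial (Fin n) k) =
            X i ^ m * monomial (e - Finsupp.single i m) 1 := by
          rw [X_pow_eq_monomial, monomial_mul, one_mul, add_tsub_cancel_of_le]
          simpa using hi
        rw [h2, mul_smul, hk]
        exact Submodule.zero_mem _
    | add a b ha hb => rw [add_smul]; exact Submodule.add_mem _ ha hb
  refine ⟨⟨(Set.finite_range f).toFinset, ?_⟩⟩
  rw [Set.Finite.coe_toFinset, eq_top_iff]
  intro q _
  have hq : q ∈ Submodule.span (MvPolynomial (Fin n) k) (G : Set Q) := by rw [hG]; trivial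
  rw [← Set.image_id (G : Set Q), Finsupp.mem_span_image_iff_linearCombination] at hq
  obtain ⟨l, hl, rfl⟩ := hq
  rw [Finsupp.linearCombination_apply]
  exact Submodule.sum_mem _ fun g hg => hT _ _ (hl hg)

theorem fin_transfer {n m : ℕ} {k : Type*} [Field k] {M : Type*} [AddCommGroup M]
    [Module (MvPolynomial (Fin n) k) M] [Module k M] [IsScalarTower k (MvPolynomial (Fin n) k) M]
    [Module.Finite (MvPolynomial (Fin n) k) M]
    (K W : Submodule (MvPolynomial (Fin n) k) M) (A B : Submodule k M)
    (hA : A = K.restrictScalars k) (hB : B = W.restrictScalars k)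
    (hk : ∀ (i : Fin n) (q : M), q ∈ K →
      (MvPolynomial.X i ^ m : MvPolynomial (Fin n) k) • q ∈ W) :
    Module.Finite k (A ⧸ B.comap A.subtype) := by
  subst hA hB
  have : Module.Finite k (K ⧸ W.comap K.subtype) := by
    refine fin_of_kill (n := n) (m := m) ?_
    intro i q
    obtain ⟨v, rfl⟩ := Submodule.Quotient.mk_surjective _ q
    rw [← Submodule.Quotient.mk_smul, Submodule.Quotient.mk_eq_zero]
    exact hk i v v.2
  let g : (K ⧸ W.comap K.subtype) →+
      (K.restrictScalars k ⧸ (W.restrictScalars k).comap (K.restrictScalars k).subtype) :=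
    QuotientAddGroup.map _ _ (AddMonoidHom.id K) (fun _ h => h)
  let g' : (K ⧸ W.comap K.subtype) →ₗ[k]
      (K.restrictScalars k ⧸ (W.restrictScalars k).comap (K.restrictScalars k).subtype) :=
    { g with
      map_smul' := by
        intro a q
        obtain ⟨v, rfl⟩ := Submodule.Quotient.mk_surjective _ q
        rfl }
  refine Module.Finite.of_surjective g' ?_
  intro q
  obtain ⟨v, rfl⟩ := Submodule.Quotient.mk_surjective _ q
  exact ⟨Submodule.Quotient.mk (p := W.comap K.subtype) v, rfl⟩

section ops
variable (p n : ℕ) (k : Type) [Field k]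

/-- i-th partial differential -/
noncomputable def A (i : Fin n) :
    Module.End (MvPolynomial (Fin n) k) ((Fin n → Fin p) → MvPolynomial (Fin n) k) :=
  LinearMap.pi fun c =>
      if h : (c i : ℕ) + 1 < p then
        (MvPolynomial.X i : MvPolynomial (Fin n) k) •
          (LinearMap.proj (Function.update c i ⟨(c i : ℕ) + 1, h⟩))
      else 0

theorem A_apply (i : Fin n) (v : (Fin n → Fin p) → MvPolynomial (Fin n) k) (c : Fin n → Fin p) :
    A p n k i v c = if h : (c i : ℕ) + 1 < p then
      MvPolynomial.X i * v (Function.update c i ⟨(c i : ℕ) + 1, h⟩) else 0 := by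
  simp only [A, LinearMap.pi_apply]
  split_ifs <;> simp

/-- homotopy -/
noncomputable def H (hp : 0 < p) (i : Fin n) :
    Module.End (MvPolynomial (Fin n) k) ((Fin n → Fin p) → MvPolynomial (Fin n) k) :=
  LinearMap.pi fun c =>
      if (c i : ℕ) = p - 1 then (LinearMap.proj (Function.update c i ⟨0, hp⟩)) else 0

theorem H_apply (hp : 0 < p) (i : Fin n) (v : (Fin n → Fin p) → MvPolynomial (Fin n) k)
    (c : Fin n → Fin p) :
    H p n k hp i v c = if (c i : ℕ) = p - 1 then v (Function.update c i ⟨0, hp⟩) else 0 := by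
  simp only [H, LinearMap.pi_apply]
  split_ifs <;> simp

theorem comm_AA (i j : Fin n) (hij : i ≠ j) : Commute (A p n k i) (A p n k j) := by
  refine LinearMap.ext fun v => funext fun c => ?_
  simp only [Module.End.mul_apply, A_apply, Function.update_of_ne hij, Function.update_of_ne hij.symm]
  split_ifs <;> try simp only [mul_zero]
  rw [Function.update_comm hij]; ring

theorem comm_HA (hp : 0 < p) (i j : Fin n) (hij : i ≠ j) :
    Commute (H p n k hp i) (A p n k j) := by
  refine LinearMap.ext fun v => funext fun c => ?_
  simp only [Module.End.mul_apply, A_apply, H_apply, Function.update_of_ne hij,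
    Function.update_of_ne hij.symm]
  split_ifs <;> try simp only [mul_zero]
  rw [Function.update_comm hij]

theorem A_pow (i : Fin n) (j : ℕ) : ∀ (v : (Fin n → Fin p) → MvPolynomial (Fin n) k)
    (c : Fin n → Fin p),
    (A p n k i ^ j) v c = if h : (c i : ℕ) + j < p then
      MvPolynomial.X i ^ j * v (Function.update c i ⟨(c i : ℕ) + j, h⟩) else 0 := by
  induction j with
  | zero => intro v c; simp
  | succ j ih =>
    intro v c
    rw [pow_succ, Module.End.mul_apply, ih]
    simp only [A_apply, Function.update_self, Function.update_idem]
    by_cases h : (c i : ℕ) + (j + 1) < p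
    · rw [dif_pos (by omega), dif_pos (by omega), dif_pos h, pow_succ, mul_assoc]
      rfl
    · rw [dif_neg h]
      split_ifs
      · omega
      · simp
      · rfl

theorem sum_A (hp : 0 < p) (i : Fin n) :
    ∑ j ∈ Finset.range p, A p n k i ^ (p - 1 - j) * H p n k hp i * A p n k i ^ j =
      (MvPolynomial.X i ^ (p - 1) : MvPolynomial (Fin n) k) • 1 := by
  refine LinearMap.ext fun v => funext fun c => ?_
  rw [LinearMap.sum_apply, Finset.sum_apply]
  have hc := (c i).2
  rw [Finset.sum_eq_single (c i : ℕ)]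
  · simp only [Module.End.mul_apply, A_pow, H_apply, Function.update_self, Function.update_idem]
    rw [dif_pos (by omega), if_pos (by omega), dif_pos (by omega)]
    simp only [zero_add, Fin.eta, Function.update_eq_self]
    rw [← mul_assoc, ← pow_add, Nat.sub_add_cancel (by omega)]
    simp
  · intro j hj hne
    rw [Finset.mem_range] at hj
    simp only [Module.End.mul_apply, A_pow, H_apply, Function.update_self, Function.update_idem]
    split_ifs <;> first | omega | simp
  · intro h; exact absurd (Finset.mem_range.2 hc) h

/-- `R`-linear differential -/
noncomputable def D :
    Module.End (MvPolynomial (Fin n) k) ((Fin n → Fin p) → MvPolynomial (Fin n) k) :=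
  ∑ i, A p n k i

theorem D_eq (v) : koszulD p n k v = D p n k v := by
  funext c
  simp only [koszulD, D, LinearMap.pi_apply, LinearMap.sum_apply, Finset.sum_apply, A_apply]
  refine Finset.sum_congr rfl fun i _ => ?_
  split_ifs <;> simp

theorem D_pow (s : ℕ) : ∀ v, (koszulD p n k ^ s) v = (D p n k ^ s) v := by
  induction s with
  | zero => intro v; simp
  | succ s ih => intro v; rw [pow_succ, pow_succ, Module.End.mul_apply, Module.End.mul_apply, ih, D_eq]

theorem sum_D (hp : p.Prime) [CharP k p] (i : Fin n) :
    ∑ j ∈ Finset.range p, D p n k ^ (p - 1 - j) * H p n k hp.pos i * D p n k ^ j =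
      (MvPolynomial.X i ^ (p - 1) : MvPolynomial (Fin n) k) • 1 := by
  have hD : D p n k = A p n k i + ∑ j ∈ Finset.univ.erase i, A p n k j := by
    rw [D, Finset.add_sum_erase _ _ (Finset.mem_univ i)]
  rw [← sum_A p n k hp.pos i, hD]
  refine homotopy p hp ?_ _ _ _ ?_ ?_
  · refine LinearMap.ext fun v => funext fun c => ?_
    have : ((p : ℕ) : MvPolynomial (Fin n) k) = 0 := CharP.cast_eq_zero _ _
    simp [this]
  · exact Commute.sum_right _ _ _ fun j hj => comm_AA p n k i j (Finset.ne_of_mem_erase hj).symm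
  · exact Commute.sum_right _ _ _ fun j hj => comm_HA p n k _ i j (Finset.ne_of_mem_erase hj).symm

end ops
end Kz

theorem stmt_11 (p n : ℕ) (hp : p.Prime) (k : Type) [Field k] [CharP k p] :
    ∀ s : ℕ, 1 ≤ s → s ≤ p - 1 →
      FiniteDimensional k
        (↥(LinearMap.ker (koszulD p n k ^ s)) ⧸
          (LinearMap.range (koszulD p n k ^ (p - s))).comap
            (LinearMap.ker (koszulD p n k ^ s)).subtype) := by
  intro s hs1 hs2
  refine Kz.fin_transfer (n := n) (m := p - 1) (LinearMap.ker (Kz.D p n k ^ s))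
    (LinearMap.range (Kz.D p n k ^ (p - s))) _ _ ?_ ?_ ?_
  · ext v; simp [Kz.D_pow]
  · ext v; simp [Kz.D_pow]
  · intro i v hv
    rw [LinearMap.mem_ker] at hv
    have h := LinearMap.congr_fun (Kz.sum_D p n k hp i) v
    rw [LinearMap.smul_apply, Module.End.one_apply, LinearMap.sum_apply] at h
    rw [← h]
    refine Submodule.sum_mem _ fun j hj => ?_
    rw [Module.End.mul_apply, Module.End.mul_apply]
    by_cases hjs : j < s
    · have e : p - 1 - j = (p - s) + (s - 1 - j) := by omega
      rw [e, pow_add, Module.End.mul_apply]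
      exact LinearMap.mem_range_self _ _
    · have e : j = (j - s) + s := by omega
      rw [e, pow_add, Module.End.mul_apply, hv]
      simp
end
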